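/- Let k be a field, n a positive integer, and let 𝔠(n) be the set of 4-tuples (A, B, C, θ₀) ∈ M_n(k)³ × kⁿ satisfying AB = BA, AC = CA = −BC = −CB, A² = B² = 0, Aθ₀ = Bθ₀, Cθ₀ = 0. Then: (i) every crossed product k₀ ♯ k₀ⁿ is isomorphic to the Poisson algebra k^{n+1}_{(A,B,C,θ₀)} for some (A,B,C,θ₀) ∈ 𝔠(n), where k^{n+1}_{(A,B,C,θ₀)} has basis {E₁,…,E_{n+1}}, multiplication E_i ⋆ E_{n+1} = Σ_j b_{ji} E_j, E_{n+1} ⋆ E_i = Σ_j a_{ji} E_j, E_{n+1} ⋆ E_{n+1} = Σ_j θ_{0j} E_j and bracket {E_{n+1}, E_i} = Σ_j c_{ji} E_j (all other operations zero, i = 1,…,n); (ii) PH²(k₀, k₀ⁿ) is in bijection with 𝔠(n)/≈ᵃₘ, where (A,B,C,θ₀) ≈ᵃₘ (A',B',C',θ₀') iff A = A', B = B', C = C' and there exists r ∈ kⁿ with θ₀ − θ₀' = (A+B)r. -/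

import Mathlib

/-!
Let `e` be an extension of `k₀` by `k₀ⁿ` and let `s` be a lift of `1 ∈ k`. Products and brackets
land in `kⁿ`, on which they vanish, so the structure of `e` is recorded by the matrices `A`, `B`,
`C` of `v ↦ s v`, `v ↦ v s`, `v ↦ {s, v}` and by `θ₀ = s s`. Associativity and the Leibniz law
evaluated on `s` and `kⁿ` say exactly that `(A, B, C, θ₀) ∈ 𝔠(n)` (`isPoisson_modC`,
`exists_presents`). Replacing `s` by `s + r` fixes `A`, `B`, `C` and adds `(A + B) r` to `θ₀`, so
the tuples presenting a given extension form exactly one class of `≈ᵃₘ` (`Presents.rel`,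
`Presents.of_rel`). Finally `(t, v) ↦ t s + v` identifies `k^{n+1}_{(A,B,C,θ₀)}` with `e`
(`Presents.extRel`). This gives the bijection; the first claim follows by regarding a
crossed product as an extension (`extOfCrossed`).
-/

universe u

section Defs

variable (k : Type u) [Field k]

/-- A map in two variables is `k`-bilinear. -/
def IsBilin {A B C : Type u} [AddCommGroup A] [Module k A] [AddCommGroup B] [Module k B]
    [AddCommGroup C] [Module k C] (f : A → B → C) : Prop :=
  (∀ a a' b, f (a + a') b = f a b + f a' b) ∧
  (∀ (c : k) (a b), f (c • a) b = c • f a b) ∧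
  (∀ a b b', f a (b + b') = f a b + f a b') ∧
  (∀ (c : k) (a b), f a (c • b) = c • f a b)

/-- `(A, mul, br)` is a (not necessarily commutative or unital) Poisson algebra over `k`:
`mul` is a bilinear associative multiplication, `br` is a Lie bracket and the
Leibniz law `[ab, c] = [a,c]b + a[b,c]` holds. -/
structure IsPoisson {A : Type u} [AddCommGroup A] [Module k A]
    (mul br : A → A → A) : Prop where
  mul_bilin : IsBilin k mul
  br_bilin : IsBilin k br
  mul_assoc : ∀ a b c, mul (mul a b) c = mul a (mul b c)
  br_alt : ∀ a, br a a = 0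
  jacobi : ∀ a b c, br (br a b) c + br (br b c) a + br (br c a) b = 0
  leibniz : ∀ a b c, br (mul a b) c = mul (br a c) b + mul a (br b c)

variable (P V : Type u) [AddCommGroup P] [Module k P] [AddCommGroup V] [Module k V]

/-- A pre-crossed datum `Ω(P,V) = (⇀, ◁, ϑ, ·_V, ▷, f, [-,-]_V)` of a Poisson algebra `P`
by a vector space `V`:  seven bilinear maps.  Here `hl = ⇀`, `hr = ◁`, `theta = ϑ`,
`mulV = ·_V`, `lact = ▷`, `cf = f` and `brV = [-,-]_V`. -/
structure PreCrossedDatum where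
  hl : P → V → V
  hr : V → P → V
  theta : P → P → V
  mulV : V → V → V
  lact : P → V → V
  cf : P → P → V
  brV : V → V → V
  hl_bilin : IsBilin k hl
  hr_bilin : IsBilin k hr
  theta_bilin : IsBilin k theta
  mulV_bilin : IsBilin k mulV
  lact_bilin : IsBilin k lact
  cf_bilin : IsBilin k cf
  brV_bilin : IsBilin k brV

variable {k P V}

/-- The multiplication `(p,x) ⋆ (q,y) = (pq, ϑ(p,q) + p⇀y + x◁q + x·y)` of `P ♯ V`. -/
def sharpMul (mulP : P → P → P) (Om : PreCrossedDatum k P V) :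
    P × V → P × V → P × V :=
  fun a b => (mulP a.1 b.1,
    Om.theta a.1 b.1 + Om.hl a.1 b.2 + Om.hr a.2 b.1 + Om.mulV a.2 b.2)

/-- The bracket `{(p,x), (q,y)} = ([p,q], f(p,q) + p▷y − q▷x + [x,y]_V)` of `P ♯ V`. -/
def sharpBr (brP : P → P → P) (Om : PreCrossedDatum k P V) :
    P × V → P × V → P × V :=
  fun a b => (brP a.1 b.1,
    Om.cf a.1 b.1 + Om.lact a.1 b.2 - Om.lact b.1 a.2 + Om.brV a.2 b.2)

/-- A pre-crossed datum is a crossed system when `P ♯ V` is a Poisson algebra. -/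
def IsCrossedSystem (mulP brP : P → P → P) (Om : PreCrossedDatum k P V) : Prop :=
  IsPoisson k (sharpMul mulP Om) (sharpBr brP Om)

end Defs

section Ext

/-- An extension `0 → V → E → P → 0` of the Poisson algebra `(P, mulP, brP)` by the Poisson
algebra `(V, mulV, brV)`. -/
structure PoissonExt (k P V : Type u) [Field k] [AddCommGroup P] [Module k P]
    [AddCommGroup V] [Module k V]
    (mulP brP : P → P → P) (mulV brV : V → V → V) : Type (u + 1) where
  carrier : Type u
  [addE : AddCommGroup carrier]
  [modE : Module k carrier]
  mulE : carrier → carrier → carrier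
  brE : carrier → carrier → carrier
  poisson : IsPoisson k mulE brE
  incl : V →ₗ[k] carrier
  proj : carrier →ₗ[k] P
  incl_mul : ∀ x y, incl (mulV x y) = mulE (incl x) (incl y)
  incl_br : ∀ x y, incl (brV x y) = brE (incl x) (incl y)
  proj_mul : ∀ a b, proj (mulE a b) = mulP (proj a) (proj b)
  proj_br : ∀ a b, proj (brE a b) = brP (proj a) (proj b)
  incl_inj : Function.Injective incl
  proj_surj : Function.Surjective proj
  exact : ∀ e, proj e = 0 ↔ e ∈ Set.range incl

variable {k P V : Type u} [Field k] [AddCommGroup P] [Module k P]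
  [AddCommGroup V] [Module k V] {mulP brP : P → P → P} {mulV brV : V → V → V}

/-- Equivalence of extensions: an isomorphism of Poisson algebras stabilizing `V`
and co-stabilizing `P`. -/
def ExtRel (e₁ e₂ : PoissonExt k P V mulP brP mulV brV) : Prop :=
  letI := e₁.addE; letI := e₁.modE; letI := e₂.addE; letI := e₂.modE
  ∃ φ : e₁.carrier ≃ₗ[k] e₂.carrier,
    (∀ a b, φ (e₁.mulE a b) = e₂.mulE (φ a) (φ b)) ∧
    (∀ a b, φ (e₁.brE a b) = e₂.brE (φ a) (φ b)) ∧
    (∀ v, φ (e₁.incl v) = e₂.incl v) ∧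
    (∀ a, e₂.proj (φ a) = e₁.proj a)

end Ext

section Iso

variable (k : Type u) [Field k]

/-- Isomorphism of Poisson algebras `(A, mulA, brA) ≅ (B, mulB, brB)`. -/
def PoissonIso {A B : Type u} [AddCommGroup A] [Module k A] [AddCommGroup B] [Module k B]
    (mulA brA : A → A → A) (mulB brB : B → B → B) : Prop :=
  ∃ φ : A ≃ₗ[k] B,
    (∀ x y, φ (mulA x y) = mulB (φ x) (φ y)) ∧
    (∀ x y, φ (brA x y) = brB (φ x) (φ y))

/-- A Poisson algebra is metabelian if it is an extension of an abelian Poisson algebra by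
an abelian Poisson algebra: there is a subspace `I`, abelian as a Poisson subalgebra,
containing all products and brackets (so that the quotient is abelian as well). -/
def IsMetabelian {E : Type u} [AddCommGroup E] [Module k E] (mulE brE : E → E → E) : Prop :=
  ∃ I : Submodule k E,
    (∀ x y, mulE x y ∈ I ∧ brE x y ∈ I) ∧
    (∀ x ∈ I, ∀ y ∈ I, mulE x y = 0 ∧ brE x y = 0)

end Iso

section Statement

variable (k : Type u) [Field k] (n : ℕ)

/-- The set `𝔠(n)` of 4-tuples `(A, B, C, θ₀)` satisfying `AB = BA`,
`AC = CA = −BC = −CB`, `A² = B² = 0`, `Aθ₀ = Bθ₀` and `Cθ₀ = 0`. -/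
def CMatSet : Type u :=
  {q : Matrix (Fin n) (Fin n) k × Matrix (Fin n) (Fin n) k ×
       Matrix (Fin n) (Fin n) k × (Fin n → k) //
    q.1 * q.2.1 = q.2.1 * q.1 ∧
    q.1 * q.2.2.1 = q.2.2.1 * q.1 ∧
    q.2.2.1 * q.1 = -(q.2.1 * q.2.2.1) ∧
    -(q.2.1 * q.2.2.1) = -(q.2.2.1 * q.2.1) ∧
    q.1 * q.1 = 0 ∧ q.2.1 * q.2.1 = 0 ∧
    q.1.mulVec q.2.2.2 = q.2.1.mulVec q.2.2.2 ∧
    q.2.2.1.mulVec q.2.2.2 = 0}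

/-- The multiplication of the Poisson algebra `k^{n+1}_{(A,B,C,θ₀)}` on `k × kⁿ`, where
`E_{n+1} = (1, 0)` and `E_i = (0, e_i)`:  `E_i ⋆ E_{n+1} = Σ_j b_{ji} E_j`,
`E_{n+1} ⋆ E_i = Σ_j a_{ji} E_j`, `E_{n+1} ⋆ E_{n+1} = Σ_j θ_{0j} E_j`. -/
def mulModC (q : Matrix (Fin n) (Fin n) k × Matrix (Fin n) (Fin n) k ×
    Matrix (Fin n) (Fin n) k × (Fin n → k)) :
    k × (Fin n → k) → k × (Fin n → k) → k × (Fin n → k) :=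
  fun u v => (0, v.1 • q.2.1.mulVec u.2 + u.1 • q.1.mulVec v.2 + (u.1 * v.1) • q.2.2.2)

/-- The bracket of `k^{n+1}_{(A,B,C,θ₀)}`: `{E_{n+1}, E_i} = Σ_j c_{ji} E_j`. -/
def brModC (q : Matrix (Fin n) (Fin n) k × Matrix (Fin n) (Fin n) k ×
    Matrix (Fin n) (Fin n) k × (Fin n → k)) :
    k × (Fin n → k) → k × (Fin n → k) → k × (Fin n → k) :=
  fun u v => (0, u.1 • q.2.2.1.mulVec v.2 - v.1 • q.2.2.1.mulVec u.2)

/-- The relation `≈ᵃₘ` on `𝔠(n)`: `(A,B,C,θ₀) ≈ (A',B',C',θ₀')` iff `A = A'`, `B = B'`,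
`C = C'` and `θ₀ − θ₀' = (A+B) r` for some `r ∈ kⁿ`. -/
def CMatRel (q q' : CMatSet k n) : Prop :=
  q.1.1 = q'.1.1 ∧ q.1.2.1 = q'.1.2.1 ∧ q.1.2.2.1 = q'.1.2.2.1 ∧
  ∃ r : Fin n → k, q.1.2.2.2 - q'.1.2.2.2 = (q.1.1 + q.1.2.1).mulVec r

section Helpers

variable {k n}

attribute [local instance] PoissonExt.addE PoissonExt.modE

/-- Extensions of the abelian Poisson algebra `k₀` by the abelian Poisson algebra `k₀ⁿ`. -/
abbrev AbExt (k : Type u) [Field k] (n : ℕ) : Type (u + 1) :=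
  PoissonExt k k (Fin n → k) (fun _ _ => 0) (fun _ _ => 0) (fun _ _ => 0) (fun _ _ => 0)

/-- The algebra `k^{n+1}_{(A,B,C,θ₀)}` satisfies the Poisson axioms. -/
theorem isPoisson_modC (q : CMatSet k n) :
    IsPoisson k (mulModC k n q.1) (brModC k n q.1) := by
  obtain ⟨⟨A, B, C, t⟩, h1, h2, h3, h4, h5, h6, h7, h8⟩ := q
  dsimp only at *
  -- The matrix identities as identities between operators on `kⁿ`, oriented so that every
  -- composite rewrites to a normal form (`A (B v)` or `A (C v)`, up to sign).
  have e1 : ∀ v, B.mulVec (A.mulVec v) = A.mulVec (B.mulVec v) := fun v => by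
    simp only [Matrix.mulVec_mulVec, h1]
  have e2 : ∀ v, C.mulVec (A.mulVec v) = A.mulVec (C.mulVec v) := fun v => by
    simp only [Matrix.mulVec_mulVec, h2]
  have e3 : ∀ v, B.mulVec (C.mulVec v) = -A.mulVec (C.mulVec v) := fun v => by
    simp only [Matrix.mulVec_mulVec, h2, h3, Matrix.neg_mulVec, neg_neg]
  have e4 : ∀ v, C.mulVec (B.mulVec v) = -A.mulVec (C.mulVec v) := fun v => by
    simp only [Matrix.mulVec_mulVec, h2, h3, h4, Matrix.neg_mulVec, neg_neg]
  have e5 : ∀ v, A.mulVec (A.mulVec v) = 0 := fun v => by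
    simp only [Matrix.mulVec_mulVec, h5, Matrix.zero_mulVec]
  have e6 : ∀ v, B.mulVec (B.mulVec v) = 0 := fun v => by
    simp only [Matrix.mulVec_mulVec, h6, Matrix.zero_mulVec]
  constructor
  · refine ⟨?_, ?_, ?_, ?_⟩ <;> intros <;>
      simp only [mulModC, Prod.fst_add, Prod.snd_add, Prod.smul_fst, Prod.smul_snd,
        Matrix.mulVec_add, Matrix.mulVec_smul, smul_eq_mul, Prod.mk_add_mk, Prod.smul_mk,
        add_zero, Prod.mk.injEq, mul_zero, true_and] <;> module
  · refine ⟨?_, ?_, ?_, ?_⟩ <;> intros <;>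
      simp only [brModC, Prod.fst_add, Prod.snd_add, Prod.smul_fst, Prod.smul_snd,
        Matrix.mulVec_add, Matrix.mulVec_smul, smul_eq_mul, Prod.mk_add_mk, Prod.smul_mk,
        add_zero, Prod.mk.injEq, mul_zero, true_and] <;> module
  · intro a b c
    simp only [mulModC, Matrix.mulVec_add, Matrix.mulVec_smul, e1, e5, e6, h7, Prod.mk.injEq,
      true_and]
    module
  · intro a
    simp [brModC]
  · intro a b c
    simp only [brModC, Matrix.mulVec_sub, Matrix.mulVec_smul, Prod.mk_add_mk, Prod.mk_eq_zero,
      add_zero, true_and]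
    module
  · intro a b c
    simp only [brModC, mulModC, Matrix.mulVec_sub, Matrix.mulVec_add, Matrix.mulVec_smul,
      e2, e3, e4, h8, Prod.mk_add_mk, Prod.mk.injEq, add_zero, true_and]
    module

/-- `k^{n+1}_{(A,B,C,θ₀)}` as an extension of `k₀` by `k₀ⁿ`. -/
def extOf (q : CMatSet k n) : AbExt k n where
  carrier := k × (Fin n → k)
  mulE := mulModC k n q.1
  brE := brModC k n q.1
  poisson := isPoisson_modC q
  incl := LinearMap.inr k k (Fin n → k)
  proj := LinearMap.fst k k (Fin n → k)
  incl_mul x y := by simp [mulModC]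
  incl_br x y := by simp [brModC]
  proj_mul a b := rfl
  proj_br a b := rfl
  incl_inj := LinearMap.inr_injective
  proj_surj := LinearMap.fst_surjective
  exact e := by
    constructor
    · intro h
      exact ⟨e.2, Prod.ext h.symm rfl⟩
    · rintro ⟨v, rfl⟩
      rfl

/-- The tuple `q = (A, B, C, θ₀)` describes the extension `e` in the sense that some lift `s`
of `1 ∈ k` acts on `kⁿ` by left multiplication `A`, right multiplication `B` and bracket `C`,
and has square `θ₀`. -/
def Presents (e : AbExt k n) (q : CMatSet k n) : Prop :=
  ∃ s : e.carrier, e.proj s = 1 ∧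
    (∀ v, e.mulE s (e.incl v) = e.incl (q.1.1.mulVec v)) ∧
    (∀ v, e.mulE (e.incl v) s = e.incl (q.1.2.1.mulVec v)) ∧
    (∀ v, e.brE s (e.incl v) = e.incl (q.1.2.2.1.mulVec v)) ∧
    e.mulE s s = e.incl q.1.2.2.2

theorem presents_extOf (q : CMatSet k n) : Presents (extOf q) q := by
  refine ⟨((1, 0) : k × (Fin n → k)), rfl, ?_, ?_, ?_, ?_⟩
  · intro v
    change mulModC k n q.1 (1, 0) (0, v) = (0, q.1.1.mulVec v)
    simp [mulModC]
  · intro v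
    change mulModC k n q.1 (0, v) (1, 0) = (0, q.1.2.1.mulVec v)
    simp [mulModC]
  · intro v
    change brModC k n q.1 (1, 0) (0, v) = (0, q.1.2.2.1.mulVec v)
    simp [brModC]
  · change mulModC k n q.1 (1, 0) (1, 0) = (0, q.1.2.2.2)
    simp [mulModC]

/-- A linear map from `kⁿ` into an extension that dies in the quotient is given by a matrix. -/
theorem exists_matrix (e : AbExt k n) (f : (Fin n → k) → e.carrier)
    (hadd : ∀ v w, f (v + w) = f v + f w) (hsmul : ∀ (c : k) v, f (c • v) = c • f v)
    (hf : ∀ v, e.proj (f v) = 0) :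
    ∃ M : Matrix (Fin n) (Fin n) k, ∀ v, f v = e.incl (M.mulVec v) := by
  choose g hg using fun v => (e.exact (f v)).1 (hf v)
  let G : (Fin n → k) →ₗ[k] (Fin n → k) :=
    { toFun := g
      map_add' := fun v w => e.incl_inj (by rw [map_add, hg, hg, hg, hadd])
      map_smul' := fun c v => e.incl_inj (by rw [map_smul, hg, hg, hsmul]; rfl) }
  refine ⟨LinearMap.toMatrix' G, fun v => ?_⟩
  rw [LinearMap.toMatrix'_mulVec]
  exact (hg v).symm

theorem br_antisymm {E : Type u} [AddCommGroup E] [Module k E] {mul br : E → E → E}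
    (h : IsPoisson k mul br) (a b : E) : br a b = -br b a := by
  have h0 := h.br_alt (a + b)
  rw [h.br_bilin.1, h.br_bilin.2.2.1, h.br_bilin.2.2.1, h.br_alt, h.br_alt, zero_add,
    add_zero] at h0
  exact eq_neg_of_add_eq_zero_left h0

theorem IsBilin.zero_left {A B C : Type u} [AddCommGroup A] [Module k A] [AddCommGroup B]
    [Module k B] [AddCommGroup C] [Module k C] {f : A → B → C} (h : IsBilin k f) (b : B) :
    f 0 b = 0 := by
  simpa using h.2.1 0 0 b

theorem IsBilin.zero_right {A B C : Type u} [AddCommGroup A] [Module k A] [AddCommGroup B]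
    [Module k B] [AddCommGroup C] [Module k C] {f : A → B → C} (h : IsBilin k f) (a : A) :
    f a 0 = 0 := by
  simpa using h.2.2.2 0 a 0

theorem IsBilin.neg_right {A B C : Type u} [AddCommGroup A] [Module k A] [AddCommGroup B]
    [Module k B] [AddCommGroup C] [Module k C] {f : A → B → C} (h : IsBilin k f) (a : A) (b : B) :
    f a (-b) = -f a b := by
  simpa using h.2.2.2 (-1) a b

theorem IsBilin.neg_left {A B C : Type u} [AddCommGroup A] [Module k A] [AddCommGroup B]
    [Module k B] [AddCommGroup C] [Module k C] {f : A → B → C} (h : IsBilin k f) (a : A) (b : B) :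
    f (-a) b = -f a b := by
  simpa using h.2.1 (-1) a b

/-- Every extension is presented by some tuple in `𝔠(n)`: each defining equation of `𝔠(n)` is
an instance of associativity or of the Leibniz law. -/
theorem exists_presents (e : AbExt k n) : ∃ q, Presents e q := by
  obtain ⟨s, hs⟩ := e.proj_surj 1
  have hP := e.poisson
  have hm := hP.mul_bilin
  have hb := hP.br_bilin
  obtain ⟨A, hA⟩ := exists_matrix e (fun v => e.mulE s (e.incl v))
    (fun v w => by rw [map_add, hm.2.2.1]) (fun c v => by rw [map_smul, hm.2.2.2])
    (fun v => e.proj_mul _ _)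
  obtain ⟨B, hB⟩ := exists_matrix e (fun v => e.mulE (e.incl v) s)
    (fun v w => by rw [map_add, hm.1]) (fun c v => by rw [map_smul, hm.2.1])
    (fun v => e.proj_mul _ _)
  obtain ⟨C, hC⟩ := exists_matrix e (fun v => e.brE s (e.incl v))
    (fun v w => by rw [map_add, hb.2.2.1]) (fun c v => by rw [map_smul, hb.2.2.2])
    (fun v => e.proj_br _ _)
  obtain ⟨t, ht⟩ := (e.exact (e.mulE s s)).1 (e.proj_mul _ _)
  have hC' : ∀ v, e.brE (e.incl v) s = -e.incl (C.mulVec v) := fun v => by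
    rw [br_antisymm hP, hC]
  have h0 : ∀ v w, e.mulE (e.incl v) (e.incl w) = 0 := fun v w => by
    rw [← e.incl_mul, map_zero]
  have h0' : ∀ v w, e.brE (e.incl v) (e.incl w) = 0 := fun v w => by
    rw [← e.incl_br, map_zero]
  have hss : e.brE s s = 0 := hP.br_alt s
  have ext_mat : ∀ M N : Matrix (Fin n) (Fin n) k,
      (∀ v, e.incl (M.mulVec v) = e.incl (N.mulVec v)) → M = N := fun M N h =>
    Matrix.ext_of_mulVec_single fun i => e.incl_inj (h _)
  have r1 : A * B = B * A := ext_mat _ _ fun v => by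
    have := hP.mul_assoc s (e.incl v) s
    rw [hA, hB, hB, hA] at this
    rw [← Matrix.mulVec_mulVec, ← Matrix.mulVec_mulVec, this]
  have r2 : A * C = C * A := ext_mat _ _ fun v => by
    have := hP.leibniz s (e.incl v) s
    rw [hA, hC', hss, hm.zero_left, hC', hm.neg_right, hA, zero_add, neg_inj] at this
    rw [← Matrix.mulVec_mulVec, ← Matrix.mulVec_mulVec, this]
  have r3 : A * C = -(B * C) := ext_mat _ _ fun v => by
    have := hP.leibniz s s (e.incl v)
    rw [← ht, h0', hC, hB, hA] at this
    rw [Matrix.neg_mulVec, map_neg, ← Matrix.mulVec_mulVec, ← Matrix.mulVec_mulVec]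
    exact eq_neg_of_add_eq_zero_right this.symm
  have r4 : B * C = C * B := ext_mat _ _ fun v => by
    have := hP.leibniz (e.incl v) s s
    rw [hB, hC', hss, hm.zero_right, hC', hm.neg_left, hB, add_zero, neg_inj] at this
    rw [← Matrix.mulVec_mulVec, ← Matrix.mulVec_mulVec, this]
  have r5 : A * A = 0 := ext_mat _ _ fun v => by
    have := hP.mul_assoc s s (e.incl v)
    rw [← ht, h0, hA, hA] at this
    rw [← Matrix.mulVec_mulVec, ← this, Matrix.zero_mulVec, map_zero]
  have r6 : B * B = 0 := ext_mat _ _ fun v => by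
    have := hP.mul_assoc (e.incl v) s s
    rw [← ht, h0, hB, hB] at this
    rw [← Matrix.mulVec_mulVec, this, Matrix.zero_mulVec, map_zero]
  have r7 : A.mulVec t = B.mulVec t := e.incl_inj (by
    have := hP.mul_assoc s s s
    rw [← ht, hA, hB] at this
    exact this.symm)
  have r8 : C.mulVec t = 0 := e.incl_inj (by
    have := hP.leibniz s s s
    rw [← ht, hC', hss, hm.zero_left, hm.zero_right, add_zero] at this
    rw [map_zero, neg_eq_zero.1 this])
  exact ⟨⟨(A, B, C, t), r1, r2, r2 ▸ r3, by dsimp only; rw [r4], r5, r6, r7, r8⟩,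
    s, hs, hA, hB, hC, ht.symm⟩

/-- Two lifts of `1` differ by some `r ∈ kⁿ`; this leaves `A`, `B`, `C` unchanged, as `kⁿ` is
abelian, and changes `θ₀` by `(A + B) r`. -/
theorem Presents.rel {e : AbExt k n} {q q' : CMatSet k n} (h : Presents e q)
    (h' : Presents e q') : CMatRel k n q q' := by
  obtain ⟨s, hs, hA, hB, hC, ht⟩ := h
  obtain ⟨s', hs', hA', hB', hC', ht'⟩ := h'
  have hm := e.poisson.mul_bilin
  have hb := e.poisson.br_bilin
  obtain ⟨r, hr⟩ := (e.exact (s - s')).1 (by rw [map_sub, hs, hs', sub_self])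
  obtain rfl : s = s' + e.incl r := by rw [hr]; abel
  have h0 : ∀ v w, e.mulE (e.incl v) (e.incl w) = 0 := fun v w => by
    rw [← e.incl_mul, map_zero]
  have h0' : ∀ v w, e.brE (e.incl v) (e.incl w) = 0 := fun v w => by
    rw [← e.incl_br, map_zero]
  have ext_mat : ∀ M N : Matrix (Fin n) (Fin n) k,
      (∀ v, e.incl (M.mulVec v) = e.incl (N.mulVec v)) → M = N := fun M N h =>
    Matrix.ext_of_mulVec_single fun i => e.incl_inj (h _)
  have rA : q.1.1 = q'.1.1 := ext_mat _ _ fun v => by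
    rw [← hA, ← hA', hm.1, h0, add_zero]
  have rB : q.1.2.1 = q'.1.2.1 := ext_mat _ _ fun v => by
    rw [← hB, ← hB', hm.2.2.1, h0, add_zero]
  have rC : q.1.2.2.1 = q'.1.2.2.1 := ext_mat _ _ fun v => by
    rw [← hC, ← hC', hb.1, h0', add_zero]
  refine ⟨rA, rB, rC, r, e.incl_inj ?_⟩
  rw [map_sub, ← ht, ← ht', rA, rB, Matrix.add_mulVec, map_add, ← hA', ← hB', hm.1, hm.2.2.1,
    hm.2.2.1, h0]
  abel

theorem Presents.of_rel {e : AbExt k n} {q q' : CMatSet k n} (h : Presents e q)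
    (hq : CMatRel k n q q') : Presents e q' := by
  obtain ⟨s, hs, hA, hB, hC, ht⟩ := h
  obtain ⟨rA, rB, rC, r, hr⟩ := hq
  have hm := e.poisson.mul_bilin
  have hb := e.poisson.br_bilin
  have h0 : ∀ v w, e.mulE (e.incl v) (e.incl w) = 0 := fun v w => by
    rw [← e.incl_mul, map_zero]
  have h0' : ∀ v w, e.brE (e.incl v) (e.incl w) = 0 := fun v w => by
    rw [← e.incl_br, map_zero]
  refine ⟨s + e.incl (-r), ?_, fun v => ?_, fun v => ?_, fun v => ?_, ?_⟩
  · rw [map_add, hs, (e.exact _).2 ⟨_, rfl⟩, add_zero]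
  · rw [hm.1, h0, add_zero, hA, rA]
  · rw [hm.2.2.1, h0, add_zero, hB, rB]
  · rw [hb.1, h0', add_zero, hC, rC]
  · rw [hm.1, hm.2.2.1, hm.2.2.1, h0, hA, hB, ht, add_zero, ← map_add, ← map_add]
    congr 1
    rw [Matrix.add_mulVec] at hr
    rw [Matrix.mulVec_neg, Matrix.mulVec_neg, sub_eq_iff_eq_add.1 hr]
    abel

theorem Presents.of_extRel {e e' : AbExt k n} {q : CMatSet k n} (h : Presents e q)
    (he : ExtRel e e') : Presents e' q := by
  obtain ⟨s, hs, hA, hB, hC, ht⟩ := h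
  obtain ⟨φ, h1, h2, h3, h4⟩ := he
  refine ⟨φ s, ?_, fun v => ?_, fun v => ?_, fun v => ?_, ?_⟩
  · rw [h4, hs]
  · rw [← h3, ← h1, hA, h3]
  · rw [← h3, ← h1, hB, h3]
  · rw [← h3, ← h2, hC, h3]
  · rw [← h1, ht, h3]

/-- If `s` is a lift of `1` exhibiting the tuple `q`, then `(t, v) ↦ t s + v` is an equivalence
of extensions from `k^{n+1}_q`. -/
theorem Presents.extRel {e : AbExt k n} {q : CMatSet k n} (h : Presents e q) :
    ExtRel (extOf q) e := by
  obtain ⟨s, hs, hA, hB, hC, ht⟩ := h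
  have hP := e.poisson
  have hm := hP.mul_bilin
  have hb := hP.br_bilin
  have h0 : ∀ v w, e.mulE (e.incl v) (e.incl w) = 0 := fun v w => by
    rw [← e.incl_mul, map_zero]
  have h0' : ∀ v w, e.brE (e.incl v) (e.incl w) = 0 := fun v w => by
    rw [← e.incl_br, map_zero]
  have hC' : ∀ v, e.brE (e.incl v) s = -e.incl (q.1.2.2.1.mulVec v) := fun v => by
    rw [br_antisymm hP, hC]
  have hi : ∀ v, e.proj (e.incl v) = 0 := fun v => (e.exact _).2 ⟨v, rfl⟩
  let F : k × (Fin n → k) →ₗ[k] e.carrier :=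
    (LinearMap.toSpanSingleton k e.carrier s).coprod e.incl
  have hF : ∀ x, F x = x.1 • s + e.incl x.2 := fun x => rfl
  have hpF : ∀ x, e.proj (F x) = x.1 := fun x => by
    rw [hF, map_add, map_smul, hs, hi, add_zero, smul_eq_mul, mul_one]
  have hbij : Function.Bijective F := by
    constructor
    · rw [← LinearMap.ker_eq_bot, LinearMap.ker_eq_bot']
      intro x hx
      have hx1 : x.1 = 0 := by rw [← hpF, hx, map_zero]
      rw [hF, hx1, zero_smul, zero_add] at hx
      exact Prod.ext hx1 (e.incl_inj (hx.trans (map_zero _).symm))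
    · intro y
      obtain ⟨v, hv⟩ := (e.exact (y - e.proj y • s)).1 (by
        rw [map_sub, map_smul, hs, smul_eq_mul, mul_one, sub_self])
      exact ⟨(e.proj y, v), by rw [hF, hv]; abel⟩
  have hmulF : ∀ a b, F (mulModC k n q.1 a b) = e.mulE (F a) (F b) := fun a b => by
    simp only [hF, mulModC, map_add, map_smul, hm.1, hm.2.1, hm.2.2.1, hm.2.2.2, hA, hB, h0, ht]
    module
  have hbrF : ∀ a b, F (brModC k n q.1 a b) = e.brE (F a) (F b) := fun a b => by
    simp only [hF, brModC, map_sub, map_smul, hb.1, hb.2.1, hb.2.2.1, hb.2.2.2, hC, hC', h0',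
      hP.br_alt]
    module
  refine ⟨LinearEquiv.ofBijective F hbij, hmulF, hbrF, ?_, ?_⟩
  · intro v
    change F (0, v) = e.incl v
    rw [hF, zero_smul, zero_add]
  · intro a
    exact hpF a

/-- A crossed product `k₀ ♯ k₀ⁿ` as an extension of `k₀` by `k₀ⁿ`. -/
def extOfCrossed (Om : PreCrossedDatum k k (Fin n → k))
    (hmul : Om.mulV = fun _ _ => 0) (hbr : Om.brV = fun _ _ => 0)
    (hOm : IsCrossedSystem (fun _ _ => 0) (fun _ _ => 0) Om) : AbExt k n where
  carrier := k × (Fin n → k)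
  mulE := sharpMul (fun _ _ => 0) Om
  brE := sharpBr (fun _ _ => 0) Om
  poisson := hOm
  incl := LinearMap.inr k k (Fin n → k)
  proj := LinearMap.fst k k (Fin n → k)
  incl_mul x y := by
    simp [sharpMul, hmul, Om.theta_bilin.zero_left, Om.hl_bilin.zero_left,
      Om.hr_bilin.zero_right]
  incl_br x y := by
    simp [sharpBr, hbr, Om.cf_bilin.zero_left, Om.lact_bilin.zero_left]
  proj_mul a b := rfl
  proj_br a b := rfl
  incl_inj := LinearMap.inr_injective
  proj_surj := LinearMap.fst_surjective
  exact e := by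
    constructor
    · intro h
      exact ⟨e.2, Prod.ext h.symm rfl⟩
    · rintro ⟨v, rfl⟩
      rfl

theorem exists_poissonIso (Om : PreCrossedDatum k k (Fin n → k))
    (hmul : Om.mulV = fun _ _ => 0) (hbr : Om.brV = fun _ _ => 0)
    (hOm : IsCrossedSystem (fun _ _ => 0) (fun _ _ => 0) Om) :
    ∃ q : CMatSet k n,
      PoissonIso k (sharpMul (fun _ _ => 0) Om) (sharpBr (fun _ _ => 0) Om)
        (mulModC k n q.1) (brModC k n q.1) := by
  obtain ⟨q, hq⟩ := exists_presents (extOfCrossed Om hmul hbr hOm)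
  obtain ⟨φ, h1, h2⟩ : PoissonIso k (mulModC k n q.1) (brModC k n q.1)
      (sharpMul (fun _ _ => 0) Om) (sharpBr (fun _ _ => 0) Om) := by
    obtain ⟨φ, h1, h2, -, -⟩ := hq.extRel
    exact ⟨φ, h1, h2⟩
  refine ⟨q, φ.symm, fun x y => ?_, fun x y => ?_⟩
  · rw [φ.symm_apply_eq, h1, φ.apply_symm_apply, φ.apply_symm_apply]
  · rw [φ.symm_apply_eq, h2, φ.apply_symm_apply, φ.apply_symm_apply]

end Helpers

/-- **Example 2.17.**  (i) Every crossed product `k₀ ♯ k₀ⁿ` is isomorphic, as a Poisson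
algebra, to `k^{n+1}_{(A,B,C,θ₀)}` for some `(A,B,C,θ₀) ∈ 𝔠(n)`;
(ii) `PH²(k₀, k₀ⁿ)` is in bijection with `𝔠(n)/≈ᵃₘ`. -/
theorem statement11 (hn : 0 < n) :
    (∀ Om : PreCrossedDatum k k (Fin n → k),
      Om.mulV = (fun _ _ => 0) → Om.brV = (fun _ _ => 0) →
      IsCrossedSystem (fun _ _ => 0) (fun _ _ => 0) Om →
      ∃ q : CMatSet k n,
        PoissonIso k (sharpMul (fun _ _ => 0) Om) (sharpBr (fun _ _ => 0) Om)
          (mulModC k n q.1) (brModC k n q.1)) ∧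
    Nonempty
      (Quot (fun e₁ e₂ : PoissonExt k k (Fin n → k) (fun _ _ => 0) (fun _ _ => 0)
          (fun _ _ => 0) (fun _ _ => 0) => ExtRel e₁ e₂) ≃
       Quot (CMatRel k n)) := by
  constructor
  · intro Om hmul hbr hOm
    exact exists_poissonIso Om hmul hbr hOm
  · choose p hp using fun e : AbExt k n => exists_presents e
    exact ⟨{
      toFun := Quot.lift (fun e => Quot.mk _ (p e)) fun e e' he =>
        Quot.sound (((hp e).of_extRel he).rel (hp e'))
      invFun := Quot.lift (fun q => Quot.mk _ (extOf q)) fun q q' hq =>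
        (Quot.sound ((presents_extOf q).of_rel hq).extRel).symm
      left_inv := by
        rintro ⟨e⟩
        exact Quot.sound (hp e).extRel
      right_inv := by
        rintro ⟨q⟩
        exact Quot.sound ((hp (extOf q)).rel (presents_extOf q)) }⟩

end Statement
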